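/- For every prime power q there exist eight pairwise distinct points of P²(F_{q⁴}) (F_{q⁴} the field with q⁴ elements) that are in general position and that form exactly two orbits, each of length four, under the q-power Frobenius acting coordinatewise on P²(F_{q⁴}); that is, there exist two Galois orbits of size four over F_q whose union of eight points is in general position in the projective plane. -/

import Mathlib

/-!
The eight points are placed on the smooth locus `t ↦ [1 : t : t³]` of the cuspidal cubic
`x²z = y³`. A form of degree `d ≤ 3` restricted to this curve is a polynomial in `t` of degree at
most `3d` without a term of degree `3d - 1`, so when it has `3d` roots (with multiplicity) whose
sum is nonzero, the restriction vanishes identically (`eq_zero_of_le_roots`). A form of degree at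
most `2` is then zero, and a cubic form is a multiple of `x²z - y³`
(`cubic_eq_of_restrict_eq_zero`), which is smooth at every point of the parametrized locus.
General position therefore follows from linear conditions on the eight parameters `t i`: no three
and no six of them sum to zero, and the sum of all eight is never `-t i`
(`generalPosition_cuspPoint`).

The parameters are `α, α^q, α^(q²), α^(q³)` and `α + 1, …, α^(q³) + 1`, where `α` is a normal
element of `K` over its prime field. The four conjugates are then linearly independent over the
prime field, and comparing a relation `∑ c m • α^(q^m) = d` with its image under Frobenius shows
that all `c m` agree in `K` (`IsCyclicGeneric`). Each forbidden linear relation among the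
parameters has integer coefficients that are not all equal; the one exception, in characteristic
two, is six parameters omitting some pair `α^(q^m), α^(q^m) + 1`, whose sum equals `1`.
-/

/-- Eight points of `ℙ²(K)`, given by coordinate vectors `P i : Fin 3 → K`, are *in general
position* if (i) no nonzero homogeneous linear form vanishes at three of them, (ii) no nonzero
homogeneous quadratic form vanishes at six of them, and (iii) for no index `i` is there a
nonzero homogeneous cubic form vanishing at all eight of them all of whose formal partial
derivatives vanish at `P i`. -/
def GeneralPosition {K : Type*} [Field K] (P : Fin 8 → Fin 3 → K) : Prop :=
  (¬ ∃ (f : MvPolynomial (Fin 3) K) (i j l : Fin 8),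
      f ≠ 0 ∧ f.IsHomogeneous 1 ∧ i ≠ j ∧ i ≠ l ∧ j ≠ l ∧
      MvPolynomial.eval (P i) f = 0 ∧ MvPolynomial.eval (P j) f = 0 ∧
      MvPolynomial.eval (P l) f = 0) ∧
  (¬ ∃ (f : MvPolynomial (Fin 3) K) (s : Fin 6 → Fin 8),
      f ≠ 0 ∧ f.IsHomogeneous 2 ∧ Function.Injective s ∧
      ∀ m, MvPolynomial.eval (P (s m)) f = 0) ∧
  (¬ ∃ (f : MvPolynomial (Fin 3) K) (i : Fin 8),
      f ≠ 0 ∧ f.IsHomogeneous 3 ∧ (∀ j, MvPolynomial.eval (P j) f = 0) ∧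
      ∀ m : Fin 3, MvPolynomial.eval (P i) (MvPolynomial.pderiv m f) = 0)

open Polynomial in
/-- A polynomial of degree at most `N` without a term of degree `N - 1` vanishes as soon as it has
`N` roots with nonzero sum. -/
lemma eq_zero_of_le_roots {K : Type*} [Field K] (g : K[X]) (S : Multiset K)
    (hS : 0 < Multiset.card S)
    (hdeg : g.natDegree ≤ Multiset.card S) (hc : g.coeff (Multiset.card S - 1) = 0)
    (hsum : S.sum ≠ 0) (hr : g ≠ 0 → S ≤ g.roots) : g = 0 := by
  by_contra hg
  obtain ⟨r, hr⟩ := (Multiset.prod_X_sub_C_dvd_iff_le_roots hg S).2 (hr hg)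
  have hmon : (S.map fun a => X - C a).prod.Monic := monic_multiset_prod_of_monic _ _
    fun a _ => monic_X_sub_C a
  have hr0 : r ≠ 0 := by rintro rfl; simp at hr; exact hg hr
  have h1 : g.natDegree = Multiset.card S + r.natDegree := by
    rw [hr, hmon.natDegree_mul' hr0, natDegree_multiset_prod_X_sub_C_eq_card]
  have h2 : r.natDegree = 0 := by omega
  rw [eq_C_of_natDegree_eq_zero h2] at hr
  rw [hr, coeff_mul_C, multiset_prod_X_sub_C_coeff_card_pred S hS] at hc
  have h3 : r.coeff 0 = 0 := by
    rcases mul_eq_zero.1 hc with h | h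
    · exact absurd (neg_eq_zero.1 h) hsum
    · exact h
  rw [h3] at hr
  simp at hr
  exact hg hr

/-! ### Forms restricted to the cuspidal cubic -/

/-- The point `[1 : t : t³]` of the smooth locus of the cuspidal cubic `x²z = y³`. -/
def cuspPoint {K : Type*} [Field K] (t : K) : Fin 3 → K := ![1, t, t ^ 3]

open Polynomial in
/-- The restriction `f(1, t, t³)` of a ternary form to the cuspidal cubic, as a polynomial
in `t`. -/
noncomputable def cuspRestrict {K : Type*} [Field K] (f : MvPolynomial (Fin 3) K) : K[X] :=
  MvPolynomial.aeval ![1, X, X ^ 3] f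

section
variable {K : Type*} [Field K]
open Polynomial

lemma eval_cuspRestrict (f : MvPolynomial (Fin 3) K) (t : K) :
    (cuspRestrict f).eval t = MvPolynomial.eval (cuspPoint t) f := by
  induction f using MvPolynomial.induction_on with
  | C a => simp [cuspRestrict]
  | add p q hp hq => simp only [cuspRestrict, map_add, eval_add] at *; rw [hp, hq]
  | mul_X p i hp =>
    simp only [cuspRestrict, map_mul, eval_mul] at *
    rw [hp]
    congr 1
    fin_cases i <;> simp [cuspPoint]

/-- Chain rule along the parametrization `t ↦ (1, t, t³)`. -/
lemma eval_derivative_cuspRestrict (f : MvPolynomial (Fin 3) K) (t : K) :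
    (derivative (cuspRestrict f)).eval t =
      MvPolynomial.eval (cuspPoint t) (MvPolynomial.pderiv 1 f) +
        3 * t ^ 2 * MvPolynomial.eval (cuspPoint t) (MvPolynomial.pderiv 2 f) := by
  induction f using MvPolynomial.induction_on with
  | C a => simp [cuspRestrict, Polynomial.algebraMap_eq]
  | add p q hp hq =>
    simp only [cuspRestrict, map_add, eval_add] at *; rw [hp, hq]; ring
  | mul_X p i hp =>
    have he := eval_cuspRestrict p t
    simp only [cuspRestrict, map_mul, derivative_mul, eval_mul, eval_add, Derivation.leibniz,
      MvPolynomial.pderiv_X, map_add, smul_eq_mul] at *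
    rw [hp, he]
    fin_cases i <;> simp [cuspPoint] <;> ring

lemma coeff_cuspRestrict (f : MvPolynomial (Fin 3) K) (k : ℕ) :
    (cuspRestrict f).coeff k =
      ∑ m ∈ f.support, if k = m 1 + 3 * m 2 then MvPolynomial.coeff m f else 0 := by
  rw [cuspRestrict, MvPolynomial.aeval_def, MvPolynomial.eval₂_eq', finsetSum_coeff]
  refine Finset.sum_congr rfl fun m _ => ?_
  simp [Fin.prod_univ_three, Polynomial.algebraMap_eq, ← pow_mul, ← pow_add, coeff_X_pow]

lemma degree_fin_three (m : Fin 3 →₀ ℕ) : m.degree = m 0 + m 1 + m 2 := by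
  rw [Finsupp.degree_eq_sum, Fin.sum_univ_three]

/-- The restriction of a form of degree `d` has no term of degree `k` when no monomial of degree
`d` restricts to `t ^ k`. -/
lemma coeff_cuspRestrict_eq_zero {f : MvPolynomial (Fin 3) K} {d : ℕ} (hf : f.IsHomogeneous d)
    (k : ℕ) (hk : ∀ a b, a + b ≤ d → k ≠ a + 3 * b) : (cuspRestrict f).coeff k = 0 := by
  rw [coeff_cuspRestrict]
  refine Finset.sum_eq_zero fun m hm => if_neg (hk _ _ ?_)
  have h' : m.degree = d := by
    by_contra hne
    exact MvPolynomial.mem_support_iff.1 hm (hf.coeff_eq_zero hne)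
  rw [degree_fin_three] at h'
  omega

/-- A coefficient of a form can be read off the restriction when no other monomial occurring in
the form restricts to the same power of `t`. -/
lemma coeff_cuspRestrict_eq {f : MvPolynomial (Fin 3) K} {d : ℕ} (hf : f.IsHomogeneous d)
    (m : Fin 3 →₀ ℕ)
    (h : ∀ m' : Fin 3 →₀ ℕ, m'.degree = d → m 1 + 3 * m 2 = m' 1 + 3 * m' 2 →
      m' = m ∨ MvPolynomial.coeff m' f = 0) :
    (cuspRestrict f).coeff (m 1 + 3 * m 2) = MvPolynomial.coeff m f := by
  rw [coeff_cuspRestrict, Finset.sum_eq_single m]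
  · simp
  · intro m' hm' hne
    split_ifs with he
    · have hdeg : m'.degree = d := by
        by_contra hne
        exact MvPolynomial.mem_support_iff.1 hm' (hf.coeff_eq_zero hne)
      exact (h m' hdeg he).resolve_left hne
    · rfl
  · intro hm
    simpa using hm

lemma natDegree_cuspRestrict_le {f : MvPolynomial (Fin 3) K} {d : ℕ} (hf : f.IsHomogeneous d) :
    (cuspRestrict f).natDegree ≤ 3 * d := by
  rw [natDegree_le_iff_coeff_eq_zero]
  intro k hk
  exact coeff_cuspRestrict_eq_zero hf k (by omega)

/-- No nonzero form of degree at most two vanishes on the cuspidal cubic. -/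
lemma eq_zero_of_cuspRestrict_eq_zero {f : MvPolynomial (Fin 3) K} {d : ℕ} (hd : d ≤ 2)
    (hf : f.IsHomogeneous d) (h : cuspRestrict f = 0) : f = 0 := by
  ext m
  by_cases hm : m.degree = d
  · rw [← coeff_cuspRestrict_eq hf m, h]
    · simp
    · intro m' hm' he
      left
      rw [degree_fin_three] at hm hm'
      ext i
      fin_cases i <;> simp <;> omega
  · rw [hf.coeff_eq_zero hm]; simp

/-- The cubic forms vanishing on the cuspidal cubic are the multiples of its equation. -/
lemma cubic_eq_of_restrict_eq_zero {f : MvPolynomial (Fin 3) K} (hf : f.IsHomogeneous 3)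
    (h : cuspRestrict f = 0) :
    ∃ c : K, f = MvPolynomial.C c *
      (MvPolynomial.X 0 ^ 2 * MvPolynomial.X 2 - MvPolynomial.X 1 ^ 3) := by
  classical
  let m₀ : Fin 3 →₀ ℕ := Finsupp.single 0 2 + Finsupp.single 2 1
  refine ⟨MvPolynomial.coeff m₀ f, ?_⟩
  set E : MvPolynomial (Fin 3) K :=
    MvPolynomial.X 0 ^ 2 * MvPolynomial.X 2 - MvPolynomial.X 1 ^ 3 with hE
  have hEhom : E.IsHomogeneous 3 :=
    ((MvPolynomial.isHomogeneous_X_pow (R := K) 0 2).mul (MvPolynomial.isHomogeneous_X K 2)).sub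
      (MvPolynomial.isHomogeneous_X_pow 1 3)
  have hEm : MvPolynomial.coeff m₀ E = 1 := by
    have h1 : (MvPolynomial.X 0 ^ 2 * MvPolynomial.X 2 : MvPolynomial (Fin 3) K) =
        MvPolynomial.monomial m₀ 1 := by
      rw [MvPolynomial.X_pow_eq_monomial, MvPolynomial.X, MvPolynomial.monomial_mul, one_mul]
    have h2 : Finsupp.single 1 3 ≠ m₀ := by
      intro h
      simpa [m₀] using congrArg (fun v : Fin 3 →₀ ℕ => v 1) h
    rw [hE, h1, MvPolynomial.X_pow_eq_monomial, MvPolynomial.coeff_sub,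
      MvPolynomial.coeff_monomial, MvPolynomial.coeff_monomial, if_pos rfl, if_neg h2, sub_zero]
  -- Subtracting the right multiple of `E` removes the monomial `x²z`, the only one that shares
  -- its restriction `t³` with another cubic monomial.
  have key : f - MvPolynomial.C (MvPolynomial.coeff m₀ f) * E = 0 := by
    set g := f - MvPolynomial.C (MvPolynomial.coeff m₀ f) * E with hg
    have hghom : g.IsHomogeneous 3 := hf.sub (hEhom.C_mul _)
    have hgm : MvPolynomial.coeff m₀ g = 0 := by
      rw [hg, MvPolynomial.coeff_sub, MvPolynomial.coeff_C_mul, hEm, mul_one, sub_self]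
    have hgr : cuspRestrict g = 0 := by
      have h' := h
      simp only [cuspRestrict] at h' ⊢
      rw [hg, map_sub, h', hE]
      simp
    ext m
    by_cases hm : m.degree = 3
    · by_cases hmm : m = m₀
      · rw [hmm, hgm]; simp
      · rw [← coeff_cuspRestrict_eq hghom m, hgr]
        · simp
        · intro m' hm' he
          rw [degree_fin_three] at hm hm'
          have hmm' : ¬ (m 1 = 0 ∧ m 2 = 1) := by
            rintro ⟨h1, h2⟩
            refine hmm ?_
            ext i
            fin_cases i <;> simp [m₀] <;> omega
          by_cases h1 : m' 1 = 0 ∧ m' 2 = 1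
          · right
            rw [← hgm]
            congr 1
            ext i
            fin_cases i <;> simp [m₀] <;> omega
          · left
            ext i
            fin_cases i <;> simp <;> omega
    · rw [hghom.coeff_eq_zero hm]; simp
  exact sub_eq_zero.1 key

/-- Points of the cuspidal cubic are in general position when their parameters satisfy the group
law conditions: `3d` smooth points, counted with multiplicity, are cut out by a curve of degree `d`
not containing the cubic only if their parameters sum to zero. -/
lemma generalPosition_cuspPoint (t : Fin 8 → K) (ht : Function.Injective t)
    (h3 : ∀ i j l, i ≠ j → i ≠ l → j ≠ l → t i + t j + t l ≠ 0)
    (h6 : ∀ s : Fin 6 → Fin 8, Function.Injective s → ∑ m, t (s m) ≠ 0)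
    (h8 : ∀ i, ∑ j, t j + t i ≠ 0) :
    GeneralPosition fun i => cuspPoint (t i) := by
  classical
  refine ⟨?_, ?_, ?_⟩
  · rintro ⟨f, i, j, l, hf0, hf, hij, hil, hjl, hi, hj, hl⟩
    refine hf0 (eq_zero_of_cuspRestrict_eq_zero (by norm_num) hf ?_)
    refine eq_zero_of_le_roots _ {t i, t j, t l} (by simp) ?_ ?_ ?_ ?_
    · simpa using natDegree_cuspRestrict_le hf
    · exact coeff_cuspRestrict_eq_zero hf _ (by simp; omega)
    · simpa [add_assoc] using h3 i j l hij hil hjl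
    · intro hg
      rw [Multiset.le_iff_subset (by simp [ht.eq_iff, *])]
      intro x hx
      rw [mem_roots hg, IsRoot, eval_cuspRestrict]
      simp at hx
      rcases hx with rfl | rfl | rfl <;> assumption
  · rintro ⟨f, s, hf0, hf, hs, hv⟩
    refine hf0 (eq_zero_of_cuspRestrict_eq_zero le_rfl hf ?_)
    refine eq_zero_of_le_roots _ (Finset.univ.val.map fun m => t (s m)) (by simp) ?_ ?_ ?_ ?_
    · simpa using natDegree_cuspRestrict_le hf
    · exact coeff_cuspRestrict_eq_zero hf _ (by simp; omega)
    · exact h6 s hs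
    · intro hg
      rw [Multiset.le_iff_subset (Finset.univ.nodup.map (f := fun m => t (s m)) (ht.comp hs))]
      intro x hx
      rw [mem_roots hg, IsRoot, eval_cuspRestrict]
      obtain ⟨m, -, rfl⟩ := Multiset.mem_map.1 hx
      exact hv m
  · rintro ⟨f, i, hf0, hf, hv, hd⟩
    have hz : cuspRestrict f = 0 := by
      refine eq_zero_of_le_roots _ (t i ::ₘ Finset.univ.val.map t) (by simp) ?_ ?_ ?_ ?_
      · simpa using natDegree_cuspRestrict_le hf
      · exact coeff_cuspRestrict_eq_zero hf _ (by simp; omega)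
      · rw [Multiset.sum_cons, add_comm]
        exact h8 i
      · intro hg
        have hroot : ∀ j, (cuspRestrict f).IsRoot (t j) := fun j => by
          rw [IsRoot, eval_cuspRestrict]; exact hv j
        have hnd : (Finset.univ.val.map t).Nodup := Finset.univ.nodup.map ht
        rw [Multiset.le_iff_count]
        intro x
        rw [Multiset.count_cons, Multiset.count_eq_of_nodup hnd, count_roots]
        by_cases hxi : x = t i
        · have h2 : 1 < (cuspRestrict f).rootMultiplicity x := by
            rw [one_lt_rootMultiplicity_iff_isRoot hg, hxi]
            refine ⟨hroot i, ?_⟩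
            rw [IsRoot, eval_derivative_cuspRestrict, hd 1, hd 2]
            simp
          split_ifs <;> omega
        · rw [if_neg hxi, add_zero]
          split_ifs with hx
          · obtain ⟨j, -, rfl⟩ := Multiset.mem_map.1 hx
            exact (rootMultiplicity_pos hg).2 (hroot j)
          · exact Nat.zero_le _
    obtain ⟨c, rfl⟩ := cubic_eq_of_restrict_eq_zero hf hz
    refine hf0 ?_
    -- The `z`-derivative of `c (x²z - y³)` is `c x²`, which is `c` on the parametrized locus.
    have h2 := hd 2
    simp [MvPolynomial.pderiv_X, cuspPoint, Derivation.leibniz_pow] at h2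
    simp [h2]

end

/-! ### The parameters -/

/-- Every relation `∑ c m * α m = d` with integer `c m` and `d` has all its coefficients `c m`
equal in `K`. -/
def IsCyclicGeneric {K : Type*} [Field K] (α : Fin 4 → K) : Prop :=
  ∀ (c : Fin 4 → ℤ) (d : ℤ), ∑ m, (c m : K) * α m = d → ∀ i j, (c i : K) = c j

/-- A normal element over the prime field gives four conjugates satisfying no integral relation
beyond those involving their trace. -/
lemma exists_isCyclicGeneric (p n : ℕ) (hp : p.Prime) (hn : 0 < n)
    (K : Type*) [Field K] [Fintype K] [CharP K p] (hK : Fintype.card K = (p ^ n) ^ 4) :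
    ∃ a : K, IsCyclicGeneric fun m : Fin 4 => a ^ (p ^ n) ^ m.val := by
  have := Fact.mk hp
  let _ : Algebra (ZMod p) K := ZMod.algebra K p
  obtain ⟨a, ha⟩ := exists_linearIndependent_algEquiv_apply (ZMod p) K
  refine ⟨a, ?_⟩
  have hfr : Module.finrank (ZMod p) K = 4 * n := by
    have h := Module.card_eq_pow_finrank (K := ZMod p) (V := K)
    rw [hK, ZMod.card, ← pow_mul] at h
    have := Nat.pow_right_injective hp.two_le h
    omega
  set φ := FiniteField.frobeniusAlgEquivOfAlgebraic (ZMod p) K with hφ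
  have hord : orderOf φ = 4 * n := by
    rw [hφ, FiniteField.orderOf_frobeniusAlgEquivOfAlgebraic, hfr]
  have hpow : ∀ k x, (φ ^ k) x = x ^ p ^ k := fun k x => by
    rw [AlgEquiv.coe_pow, hφ, FiniteField.coe_frobeniusAlgEquivOfAlgebraic_iterate, ZMod.card]
  have hinj : Function.Injective fun m : Fin 4 => φ ^ (n * m.val) := by
    intro m m' h
    have h1 := pow_injOn_Iio_orderOf (x := φ) (x₁ := n * m.val) (x₂ := n * m'.val)
      (by rw [Set.mem_Iio, hord]; nlinarith [m.isLt])
      (by rw [Set.mem_Iio, hord]; nlinarith [m'.isLt]) h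
    exact Fin.ext (Nat.eq_of_mul_eq_mul_left hn h1)
  have hli : LinearIndependent (ZMod p) fun m : Fin 4 => a ^ (p ^ n) ^ m.val := by
    have h := ha.comp _ hinj
    convert h using 2 with m
    rw [Function.comp_apply, hpow, ← pow_mul]
  intro c d hcd
  have hcast : ∀ z : ℤ, algebraMap (ZMod p) K z = z := fun z => by simp
  -- The image of the relation under the `q`-power Frobenius, which permutes the `α m` cyclically.
  have hrot : (c 0 : K) * a ^ (p ^ n) ^ 1 + c 1 * a ^ (p ^ n) ^ 2 + c 2 * a ^ (p ^ n) ^ 3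
      + c 3 * a = d := by
    have h := DFunLike.congr_arg (φ ^ n) hcd
    have hlast : a ^ (p ^ n) ^ 4 = a := by rw [← hK]; exact FiniteField.pow_card a
    have hstep : ∀ k, (φ ^ n) (a ^ (p ^ n) ^ k) = a ^ (p ^ n) ^ (k + 1) := fun k => by
      rw [hpow, ← pow_mul, ← pow_succ]
    simp only [map_add, map_mul, map_intCast, Fin.sum_univ_four, hstep] at h
    norm_num [hlast] at h ⊢
    exact h
  have hdiff : ∑ m, ((c m - c (m - 1) : ℤ) : ZMod p) • a ^ (p ^ n) ^ m.val = 0 := by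
    simp only [Fin.sum_univ_four, Algebra.smul_def, hcast] at hcd ⊢
    simp only [show (0 - 1 : Fin 4) = 3 from rfl, show (1 - 1 : Fin 4) = 0 from rfl,
      show (2 - 1 : Fin 4) = 1 from rfl, show (3 - 1 : Fin 4) = 2 from rfl]
    norm_num at hcd hrot ⊢
    linear_combination hcd - hrot
  have hz := Fintype.linearIndependent_iff.1 hli _ hdiff
  have hz' : ∀ m, (c m : K) = c (m - 1) := fun m => by
    have := congrArg (algebraMap (ZMod p) K) (hz m)
    rw [hcast, map_zero, Int.cast_sub, sub_eq_zero] at this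
    exact this
  have h1 : (c 1 : K) = c 0 := hz' 1
  have h2 : (c 2 : K) = c 1 := hz' 2
  have h3 : (c 3 : K) = c 2 := hz' 3
  have hall : ∀ m, (c m : K) = c 0 := by
    intro m
    fin_cases m <;> simp [h1, h2, h3]
  intro m m'
  rw [hall m, hall m']

section
variable {K : Type*} [Field K]

/-- The position in its orbit of the `i`-th of the eight points. -/
def orbitPos (i : Fin 8) : Fin 4 := ⟨i.val % 4, by omega⟩

/-- The orbit, numbered `0` or `1`, of the `i`-th of the eight points. -/
def orbitIdx (i : Fin 8) : ℤ := (i.val / 4 : ℕ)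

/-- The eight parameters `α 0, …, α 3, α 0 + 1, …, α 3 + 1`. -/
def cuspParam (α : Fin 4 → K) (i : Fin 8) : K := α (orbitPos i) + (orbitIdx i : K)

/-- The multiplicity, `0` or `1`, of `α m` in the `i`-th parameter. -/
def posInd (i : Fin 8) (m : Fin 4) : ℤ := if orbitPos i = m then 1 else 0

lemma cuspParam_eq (α : Fin 4 → K) (i : Fin 8) :
    cuspParam α i = ∑ m, (posInd i m : K) * α m + (orbitIdx i : K) := by
  simp [cuspParam, posInd]

lemma sum_cuspParam (α : Fin 4 → K) :
    ∑ i, cuspParam α i = ∑ m, ((2 : ℤ) : K) * α m + ((4 : ℤ) : K) := by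
  simp [Fin.sum_univ_eight, Fin.sum_univ_four, cuspParam, orbitPos, orbitIdx]
  ring

/-- Two coefficients differing by `1` rule out a relation in every characteristic. -/
lemma IsCyclicGeneric.ne {α : Fin 4 → K} (h : IsCyclicGeneric α) (c : Fin 4 → ℤ) (d : ℤ)
    (hc : ∃ m m', c m = c m' + 1) : ∑ m, (c m : K) * α m + (d : K) ≠ 0 := by
  intro h0
  obtain ⟨m, m', hm⟩ := hc
  have := h c (-d) (by push_cast; linear_combination h0) m m'
  rw [hm] at this
  simp at this

lemma cuspParam_injective {α : Fin 4 → K} (h : IsCyclicGeneric α) :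
    Function.Injective (cuspParam α) := by
  intro i j hij
  by_contra hne
  by_cases hpos : orbitPos i = orbitPos j
  · have h1 : (orbitIdx i : K) = orbitIdx j := by
      simpa [cuspParam, hpos] using hij
    have h2 : orbitIdx i = 0 ∧ orbitIdx j = 1 ∨ orbitIdx i = 1 ∧ orbitIdx j = 0 := by
      clear h1 hij
      revert i j; decide
    rcases h2 with ⟨h2, h3⟩ | ⟨h2, h3⟩ <;> simp [h2, h3] at h1
  · refine h.ne (fun m => posInd i m - posInd j m) (orbitIdx i - orbitIdx j) ?_ ?_
    · clear hij
      revert i j; decide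
    · rw [cuspParam_eq, cuspParam_eq] at hij
      push_cast
      simp only [sub_mul, Finset.sum_sub_distrib]
      linear_combination hij

lemma cuspParam_three {α : Fin 4 → K} (h : IsCyclicGeneric α) (i j l : Fin 8)
    (hij : i ≠ j) (hil : i ≠ l) (hjl : j ≠ l) :
    cuspParam α i + cuspParam α j + cuspParam α l ≠ 0 := by
  have hc : ∃ m m', posInd i m + posInd j m + posInd l m =
      posInd i m' + posInd j m' + posInd l m' + 1 := by
    revert i j l; decide
  convert h.ne (fun m => posInd i m + posInd j m + posInd l m)
    (orbitIdx i + orbitIdx j + orbitIdx l) hc using 1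
  rw [cuspParam_eq, cuspParam_eq, cuspParam_eq]
  push_cast
  simp only [add_mul, Finset.sum_add_distrib]
  ring

lemma cuspParam_eight {α : Fin 4 → K} (h : IsCyclicGeneric α) (i : Fin 8) :
    ∑ j, cuspParam α j + cuspParam α i ≠ 0 := by
  have hc : ∃ m m', 2 + posInd i m = 2 + posInd i m' + 1 := by
    revert i; decide
  convert h.ne (fun m => 2 + posInd i m) (4 + orbitIdx i) hc using 1
  rw [sum_cuspParam, cuspParam_eq]
  push_cast
  simp only [add_mul, Finset.sum_add_distrib]
  ring

/-- No six parameters sum to zero, stated through the two parameters that are left out. -/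
lemma cuspParam_compl_pair {α : Fin 4 → K} (h : IsCyclicGeneric α) (i j : Fin 8) (hij : i ≠ j) :
    ∑ l, cuspParam α l - (cuspParam α i + cuspParam α j) ≠ 0 := by
  by_cases hpos : orbitPos i = orbitPos j
  · -- The omitted parameters are `α m` and `α m + 1`.
    have h2 : orbitIdx i + orbitIdx j = 1 := by revert i j; decide
    have h2' : (orbitIdx i : K) + orbitIdx j = 1 := by exact_mod_cast congrArg (Int.cast (R := K)) h2
    intro h0
    rw [sum_cuspParam] at h0
    -- The coefficients are `0` at `m` and `2` elsewhere, so a relation forces characteristic two.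
    have htwo : (2 : K) = 0 := by
      obtain ⟨m, m', hm, hm'⟩ : ∃ m m', posInd i m = 0 ∧ posInd i m' = 1 := by
        clear h0 h2' h2 hpos hij; revert i; decide
      have := h (fun m => 2 - 2 * posInd i m) (-3) (by
        rw [cuspParam_eq, cuspParam] at h0
        simp only [← hpos] at h0
        have hi : α (orbitPos i) = ∑ m, (posInd i m : K) * α m := by simp [posInd]
        rw [hi] at h0
        push_cast at h0 ⊢
        simp only [sub_mul, mul_assoc, Finset.sum_sub_distrib, ← Finset.mul_sum] at h0 ⊢
        linear_combination h0 + h2') m m'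
      simpa [hm, hm'] using this
    have h1 : (1 : K) = 0 := by
      simp only [cuspParam, ← hpos, ← Finset.mul_sum] at h0
      push_cast at h0
      linear_combination (-1 : K) * h0 - h2' + (∑ m, α m + 2 - α (orbitPos i)) * htwo
    exact one_ne_zero h1
  · have hc : ∃ m m', 2 - (posInd i m + posInd j m) = 2 - (posInd i m' + posInd j m') + 1 := by
      revert i j; decide
    convert h.ne (fun m => 2 - (posInd i m + posInd j m))
      (4 - (orbitIdx i + orbitIdx j)) hc using 1
    rw [sum_cuspParam, cuspParam_eq, cuspParam_eq]
    push_cast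
    simp only [sub_mul, add_mul, Finset.sum_sub_distrib, Finset.sum_add_distrib]
    ring

lemma cuspParam_six {α : Fin 4 → K} (h : IsCyclicGeneric α) (s : Fin 6 → Fin 8)
    (hs : Function.Injective s) : ∑ m, cuspParam α (s m) ≠ 0 := by
  classical
  have hcard : ((Finset.univ.image s)ᶜ).card = 2 := by
    rw [Finset.card_compl, Finset.card_image_of_injective _ hs]; simp
  obtain ⟨i, j, hij, he⟩ := Finset.card_eq_two.1 hcard
  have h1 := Finset.sum_add_sum_compl (Finset.univ.image s) (cuspParam α)
  rw [he, Finset.sum_pair hij, Finset.sum_image fun _ _ _ _ e => hs e] at h1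
  have h2 := cuspParam_compl_pair h i j hij
  rwa [← h1, add_sub_cancel_right] at h2

end

/-- For every prime power `q = pⁿ` and every field `K` with `q⁴` elements
there exist eight pairwise distinct points of `ℙ²(K)` in general position forming exactly two
orbits of length four under the coordinatewise `q`-power Frobenius: there are two points
`Q 0`, `Q 1` such that the eight points `Frob^m (Q a)` (`a = 0, 1`, `m = 0, 1, 2, 3`) are
nonzero, pairwise non-proportional, and in general position. -/
theorem stmt_6 (p n : ℕ) (hp : p.Prime) (hn : 0 < n)
    (K : Type*) [Field K] [Fintype K] (hK : Fintype.card K = (p ^ n) ^ 4) :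
    ∃ (P : Fin 8 → Fin 3 → K) (Q : Fin 2 → Fin 3 → K),
      (∀ (a : Fin 2) (m : Fin 4) (j : Fin 3),
        P ⟨4 * a.val + m.val, by have := a.isLt; have := m.isLt; omega⟩ j
          = Q a j ^ (p ^ n) ^ m.val) ∧
      (∀ i, P i ≠ 0) ∧
      (∀ i i' : Fin 8, i ≠ i' → ¬ ∃ c : K, P i' = c • P i) ∧
      GeneralPosition P := by
  have := Fact.mk hp
  have : CharP K p := by
    rw [← pow_mul] at hK
    exact charP_of_card_eq_prime_pow hK
  obtain ⟨x, hx⟩ := exists_isCyclicGeneric p n hp hn K hK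
  set α : Fin 4 → K := fun m => x ^ (p ^ n) ^ m.val with hα
  refine ⟨fun i => cuspPoint (cuspParam α i), fun a => cuspPoint (x + (a.val : K)), ?_, ?_, ?_,
    generalPosition_cuspPoint _ (cuspParam_injective hx) (cuspParam_three hx) (cuspParam_six hx)
      (cuspParam_eight hx)⟩
  · intro a m j
    have hparam : cuspParam α ⟨4 * a.val + m.val, by omega⟩ =
        (x + (a.val : K)) ^ (p ^ n) ^ m.val := by
      have h1 : orbitPos ⟨4 * a.val + m.val, by omega⟩ = m :=
        Fin.ext (by simp only [orbitPos]; omega)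
      have h2 : orbitIdx ⟨4 * a.val + m.val, by omega⟩ = a.val := by
        simp only [orbitIdx]; omega
      rw [cuspParam, h1, h2, ← pow_mul, add_pow_char_pow, hα]
      simp only [← pow_mul]
      congr 1
      fin_cases a <;> simp [hp.ne_zero]
    simp only [hparam]
    fin_cases j <;> simp [cuspPoint, ← pow_mul, mul_comm]
  · intro i h
    simpa [cuspPoint] using congrFun h 0
  · rintro i i' hne ⟨c, hc⟩
    have h0 := congrFun hc 0
    have h1 := congrFun hc 1
    simp [cuspPoint] at h0 h1
    rw [← h0, one_mul] at h1
    exact hne (cuspParam_injective hx h1).symm
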